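/- Assume 0.9·d_{i0} ≤ d_i ≤ 1.1·d_{i0} for every i, 0.9·d_0 ≤ d ≤ 1.1·d_0, ρ ≥ d² + 2‖e‖², 0 < ε ≤ 1/15, the Local RIP holds, and ‖𝒜*(e)‖ ≤ εd_0/(10√2·sκ). Suppose C_L > 0 is such that ‖∇F̃(z + tΔz) − ∇F̃(z)‖ ≤ C_L·t·‖Δz‖ for all t ∈ [0,1] whenever z + τΔz ∈ 𝒩_ε ∩ 𝒩_F̃ for all τ ∈ [0,1]. Let 0 < η ≤ 1/C_L. If z ∈ 𝒩_ε ∩ 𝒩_F̃, then z′ := z − η∇F̃(z) satisfies z′ ∈ 𝒩_ε ∩ 𝒩_F̃ and F̃(z′) ≤ F̃(z) − η‖∇F̃(z)‖². -/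

import Mathlib

noncomputable section
open Finset ComplexConjugate

namespace RGD

/-- Squared Euclidean norm of a complex vector. -/
def vnormSq {n : ℕ} (v : Fin n → ℂ) : ℝ := ∑ j, ‖v j‖ ^ 2

/-- Euclidean norm of a complex vector. -/
def vnorm {n : ℕ} (v : Fin n → ℂ) : ℝ := Real.sqrt (vnormSq v)

/-- Inner product, conjugate-linear in the first argument. -/
def vinner {n : ℕ} (u v : Fin n → ℂ) : ℂ := ∑ j, conj (u j) * v j

/-- Squared Frobenius norm of a matrix. -/
def frobSq {K N : ℕ} (Z : Matrix (Fin K) (Fin N) ℂ) : ℝ := ∑ k, ∑ j, ‖Z k j‖ ^ 2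

/-- Frobenius norm of a matrix. -/
def frob {K N : ℕ} (Z : Matrix (Fin K) (Fin N) ℂ) : ℝ := Real.sqrt (frobSq Z)

/-- Frobenius inner product `⟨U,V⟩ = Tr(U*V)`, conjugate-linear in the first argument. -/
def finner {K N : ℕ} (U V : Matrix (Fin K) (Fin N) ℂ) : ℂ := ∑ k, ∑ j, conj (U k j) * V k j

/-- Spectral (operator) norm of a matrix: sup of `‖Zv‖` over the closed unit ball. -/
def opNorm {K N : ℕ} (Z : Matrix (Fin K) (Fin N) ℂ) : ℝ :=
  sSup {r : ℝ | ∃ v : Fin N → ℂ, vnorm v ≤ 1 ∧ r = vnorm (Z.mulVec v)}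

/-- Squared Frobenius norm of a block-diagonal matrix, given by its diagonal blocks. -/
def famFrobSq {K N s : ℕ} (Z : Fin s → Matrix (Fin K) (Fin N) ℂ) : ℝ := ∑ i, frobSq (Z i)

/-- Frobenius norm of a block-diagonal matrix, given by its diagonal blocks. -/
def famFrob {K N s : ℕ} (Z : Fin s → Matrix (Fin K) (Fin N) ℂ) : ℝ := Real.sqrt (famFrobSq Z)

/-- The rank-one matrix `u v*`. -/
def rankOne {K N : ℕ} (u : Fin K → ℂ) (v : Fin N → ℂ) : Matrix (Fin K) (Fin N) ℂ :=
  Matrix.of fun k j => u k * conj (v j)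

/-- `ℋ(h,x)`: block-diagonal matrix with `i`-th block `hᵢ xᵢ*`. -/
def Hmap {K N s : ℕ} (h : Fin s → Fin K → ℂ) (x : Fin s → Fin N → ℂ) :
    Fin s → Matrix (Fin K) (Fin N) ℂ := fun i => rankOne (h i) (x i)

/-- `𝒜ᵢ(Z) = (bₗ* Z aₗ)ₗ`. -/
def calAi {K N L : ℕ} (b : Fin L → Fin K → ℂ) (a : Fin L → Fin N → ℂ)
    (Z : Matrix (Fin K) (Fin N) ℂ) : Fin L → ℂ :=
  fun l => vinner (b l) (Z.mulVec (a l))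

/-- `𝒜(Z) = Σᵢ 𝒜ᵢ(Zᵢ)` on block-diagonal matrices. -/
def calA {K N L s : ℕ} (b : Fin L → Fin K → ℂ) (a : Fin s → Fin L → Fin N → ℂ)
    (Z : Fin s → Matrix (Fin K) (Fin N) ℂ) : Fin L → ℂ :=
  fun l => ∑ i, calAi b (a i) (Z i) l

/-- `𝒜ᵢ*(z) = Σₗ zₗ bₗ aₗ*`. -/
def calAdj {K N L : ℕ} (b : Fin L → Fin K → ℂ) (a : Fin L → Fin N → ℂ)
    (z : Fin L → ℂ) : Matrix (Fin K) (Fin N) ℂ :=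
  Matrix.of fun k j => ∑ l, z l * b l k * conj (a l j)

/-- `‖𝒜*(e)‖ = maxᵢ ‖𝒜ᵢ*(e)‖` (operator norms). -/
def AadjNorm {K N L s : ℕ} (b : Fin L → Fin K → ℂ) (a : Fin s → Fin L → Fin N → ℂ)
    (e : Fin L → ℂ) : ℝ :=
  ⨆ i : Fin s, opNorm (calAdj b (a i) e)

/-- `B*B = I_K`, expressed in terms of the columns `bₗ` of `B*`. -/
def BtBeqI {K L : ℕ} (b : Fin L → Fin K → ℂ) : Prop :=
  ∀ k k' : Fin K, (∑ l, b l k * conj (b l k')) = if k = k' then (1 : ℂ) else 0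

/-- `μ ≥ μ_h`, i.e. `√L ‖B h_{i0}‖_∞ ≤ μ ‖h_{i0}‖` for all `i`. -/
def muhLe {K L s : ℕ} (b : Fin L → Fin K → ℂ) (h0 : Fin s → Fin K → ℂ) (μ : ℝ) : Prop :=
  ∀ i l, Real.sqrt L * ‖vinner (b l) (h0 i)‖ ≤ μ * vnorm (h0 i)

/-- `d₀ = √(Σᵢ d_{i0}²)`. -/
def dtot {s : ℕ} (d0 : Fin s → ℝ) : ℝ := Real.sqrt (∑ i, d0 i ^ 2)

/-- Condition number `κ = (maxᵢ d_{i0}) / (minᵢ d_{i0})`. -/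
def kappa {s : ℕ} (d0 : Fin s → ℝ) : ℝ := (⨆ i, d0 i) / (⨅ i, d0 i)

/-- The observation `y = 𝒜(ℋ(h₀,x₀)) + e`. -/
def yvec {K N L s : ℕ} (b : Fin L → Fin K → ℂ) (a : Fin s → Fin L → Fin N → ℂ)
    (h0 : Fin s → Fin K → ℂ) (x0 : Fin s → Fin N → ℂ) (e : Fin L → ℂ) : Fin L → ℂ :=
  fun l => calA b a (Hmap h0 x0) l + e l

/-- `F(h,x) = ‖𝒜(ℋ(h,x)) − y‖²`. -/
def Fobj {K N L s : ℕ} (b : Fin L → Fin K → ℂ) (a : Fin s → Fin L → Fin N → ℂ)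
    (h0 : Fin s → Fin K → ℂ) (x0 : Fin s → Fin N → ℂ) (e : Fin L → ℂ)
    (h : Fin s → Fin K → ℂ) (x : Fin s → Fin N → ℂ) : ℝ :=
  vnormSq (fun l => calA b a (Hmap h x) l - yvec b a h0 x0 e l)

def G0 (z : ℝ) : ℝ := max (z - 1) 0 ^ 2

def G0' (z : ℝ) : ℝ := 2 * max (z - 1) 0

/-- The `i`-th regularizer `Gᵢ(hᵢ,xᵢ)` (including the factor `ρ`). -/
def Gi {K N L : ℕ} (b : Fin L → Fin K → ℂ) (ρ μ di : ℝ)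
    (hi : Fin K → ℂ) (xi : Fin N → ℂ) : ℝ :=
  ρ * (G0 (vnormSq hi / (2 * di)) + G0 (vnormSq xi / (2 * di))
    + ∑ l, G0 ((L : ℝ) * ‖vinner (b l) hi‖ ^ 2 / (8 * di * μ ^ 2)))

/-- The regularizer `G(h,x) = Σᵢ Gᵢ(hᵢ,xᵢ)`. -/
def Greg {K N L s : ℕ} (b : Fin L → Fin K → ℂ) (ρ μ : ℝ) (dd : Fin s → ℝ)
    (h : Fin s → Fin K → ℂ) (x : Fin s → Fin N → ℂ) : ℝ :=
  ∑ i, Gi b ρ μ (dd i) (h i) (x i)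

/-- `F̃ = F + G`. -/
def Ftil {K N L s : ℕ} (b : Fin L → Fin K → ℂ) (a : Fin s → Fin L → Fin N → ℂ)
    (h0 : Fin s → Fin K → ℂ) (x0 : Fin s → Fin N → ℂ) (e : Fin L → ℂ)
    (ρ μ : ℝ) (dd : Fin s → ℝ)
    (h : Fin s → Fin K → ℂ) (x : Fin s → Fin N → ℂ) : ℝ :=
  Fobj b a h0 x0 e h x + Greg b ρ μ dd h x

/-- The residual `𝒜(ℋ(h,x)) − y`. -/
def residual {K N L s : ℕ} (b : Fin L → Fin K → ℂ) (a : Fin s → Fin L → Fin N → ℂ)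
    (h0 : Fin s → Fin K → ℂ) (x0 : Fin s → Fin N → ℂ) (e : Fin L → ℂ)
    (h : Fin s → Fin K → ℂ) (x : Fin s → Fin N → ℂ) : Fin L → ℂ :=
  fun l => calA b a (Hmap h x) l - yvec b a h0 x0 e l

/-- Wirtinger gradient `∇F_{hᵢ} = 𝒜ᵢ*(𝒜(ℋ(h,x)) − y) xᵢ`. -/
def gradFh {K N L s : ℕ} (b : Fin L → Fin K → ℂ) (a : Fin s → Fin L → Fin N → ℂ)
    (h0 : Fin s → Fin K → ℂ) (x0 : Fin s → Fin N → ℂ) (e : Fin L → ℂ)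
    (h : Fin s → Fin K → ℂ) (x : Fin s → Fin N → ℂ) (i : Fin s) : Fin K → ℂ :=
  (calAdj b (a i) (residual b a h0 x0 e h x)).mulVec (x i)

/-- Wirtinger gradient `∇F_{xᵢ} = (𝒜ᵢ*(𝒜(ℋ(h,x)) − y))* hᵢ`. -/
def gradFx {K N L s : ℕ} (b : Fin L → Fin K → ℂ) (a : Fin s → Fin L → Fin N → ℂ)
    (h0 : Fin s → Fin K → ℂ) (x0 : Fin s → Fin N → ℂ) (e : Fin L → ℂ)
    (h : Fin s → Fin K → ℂ) (x : Fin s → Fin N → ℂ) (i : Fin s) : Fin N → ℂ :=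
  (calAdj b (a i) (residual b a h0 x0 e h x)).conjTranspose.mulVec (h i)

/-- Wirtinger gradient `∇G_{hᵢ}`. -/
def gradGh {K L s : ℕ} (b : Fin L → Fin K → ℂ) (ρ μ : ℝ) (dd : Fin s → ℝ)
    (h : Fin s → Fin K → ℂ) (i : Fin s) : Fin K → ℂ :=
  fun k => ((ρ / (2 * dd i) : ℝ) : ℂ) *
    (((G0' (vnormSq (h i) / (2 * dd i)) : ℝ) : ℂ) * h i k
      + (((L : ℝ) / (4 * μ ^ 2) : ℝ) : ℂ) *
        ∑ l, ((G0' ((L : ℝ) * ‖vinner (b l) (h i)‖ ^ 2 / (8 * dd i * μ ^ 2)) : ℝ) : ℂ)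
          * (vinner (b l) (h i) * b l k))

/-- Wirtinger gradient `∇G_{xᵢ}`. -/
def gradGx {N s : ℕ} (ρ : ℝ) (dd : Fin s → ℝ)
    (x : Fin s → Fin N → ℂ) (i : Fin s) : Fin N → ℂ :=
  fun j => ((ρ / (2 * dd i) : ℝ) : ℂ) * (((G0' (vnormSq (x i) / (2 * dd i)) : ℝ) : ℂ) * x i j)

/-- `∇F̃_{hᵢ} = ∇F_{hᵢ} + ∇G_{hᵢ}`. -/
def gradH {K N L s : ℕ} (b : Fin L → Fin K → ℂ) (a : Fin s → Fin L → Fin N → ℂ)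
    (h0 : Fin s → Fin K → ℂ) (x0 : Fin s → Fin N → ℂ) (e : Fin L → ℂ)
    (ρ μ : ℝ) (dd : Fin s → ℝ)
    (h : Fin s → Fin K → ℂ) (x : Fin s → Fin N → ℂ) (i : Fin s) : Fin K → ℂ :=
  fun k => gradFh b a h0 x0 e h x i k + gradGh b ρ μ dd h i k

/-- `∇F̃_{xᵢ} = ∇F_{xᵢ} + ∇G_{xᵢ}`. -/
def gradX {K N L s : ℕ} (b : Fin L → Fin K → ℂ) (a : Fin s → Fin L → Fin N → ℂ)
    (h0 : Fin s → Fin K → ℂ) (x0 : Fin s → Fin N → ℂ) (e : Fin L → ℂ)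
    (ρ μ : ℝ) (dd : Fin s → ℝ)
    (h : Fin s → Fin K → ℂ) (x : Fin s → Fin N → ℂ) (i : Fin s) : Fin N → ℂ :=
  fun j => gradFx b a h0 x0 e h x i j + gradGx ρ dd x i j

/-- `‖∇F̃(h,x)‖²` (squared norm of the stacked Wirtinger gradient). -/
def gradNormSq {K N L s : ℕ} (b : Fin L → Fin K → ℂ) (a : Fin s → Fin L → Fin N → ℂ)
    (h0 : Fin s → Fin K → ℂ) (x0 : Fin s → Fin N → ℂ) (e : Fin L → ℂ)
    (ρ μ : ℝ) (dd : Fin s → ℝ)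
    (h : Fin s → Fin K → ℂ) (x : Fin s → Fin N → ℂ) : ℝ :=
  ∑ i, vnormSq (gradH b a h0 x0 e ρ μ dd h x i) + ∑ i, vnormSq (gradX b a h0 x0 e ρ μ dd h x i)

/-- `‖∇F̃(h',x') − ∇F̃(h,x)‖²`. -/
def gradDiffNormSq {K N L s : ℕ} (b : Fin L → Fin K → ℂ) (a : Fin s → Fin L → Fin N → ℂ)
    (h0 : Fin s → Fin K → ℂ) (x0 : Fin s → Fin N → ℂ) (e : Fin L → ℂ)
    (ρ μ : ℝ) (dd : Fin s → ℝ)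
    (h : Fin s → Fin K → ℂ) (x : Fin s → Fin N → ℂ)
    (h' : Fin s → Fin K → ℂ) (x' : Fin s → Fin N → ℂ) : ℝ :=
  ∑ i, vnormSq (fun k => gradH b a h0 x0 e ρ μ dd h' x' i k - gradH b a h0 x0 e ρ μ dd h x i k)
  + ∑ i, vnormSq (fun j => gradX b a h0 x0 e ρ μ dd h' x' i j - gradX b a h0 x0 e ρ μ dd h x i j)

/-- Membership in `𝒩_d`. -/
def inNd {K N s : ℕ} (d0 : Fin s → ℝ)
    (h : Fin s → Fin K → ℂ) (x : Fin s → Fin N → ℂ) : Prop :=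
  ∀ i, vnorm (h i) ≤ 2 * Real.sqrt (d0 i) ∧ vnorm (x i) ≤ 2 * Real.sqrt (d0 i)

/-- Membership in `𝒩_μ`. -/
def inNmu {K L s : ℕ} (b : Fin L → Fin K → ℂ) (d0 : Fin s → ℝ) (μ : ℝ)
    (h : Fin s → Fin K → ℂ) : Prop :=
  ∀ i, ∀ l, Real.sqrt L * ‖vinner (b l) (h i)‖ ≤ 4 * Real.sqrt (d0 i) * μ

/-- `δᵢ(hᵢ,xᵢ) = ‖hᵢxᵢ* − h_{i0}x_{i0}*‖_F / d_{i0}`. -/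
def deltaI {K N : ℕ} (h0i : Fin K → ℂ) (x0i : Fin N → ℂ) (d0i : ℝ)
    (hi : Fin K → ℂ) (xi : Fin N → ℂ) : ℝ :=
  frob (rankOne hi xi - rankOne h0i x0i) / d0i

/-- Membership in `𝒩_ε`. -/
def inNeps {K N s : ℕ} (h0 : Fin s → Fin K → ℂ) (x0 : Fin s → Fin N → ℂ)
    (d0 : Fin s → ℝ) (ε : ℝ)
    (h : Fin s → Fin K → ℂ) (x : Fin s → Fin N → ℂ) : Prop :=
  ∀ i, deltaI (h0 i) (x0 i) (d0 i) (h i) (x i) ≤ ε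

/-- The global relative error `δ(h,x) = ‖ℋ(h,x) − X₀‖_F / d₀`. -/
def deltaTot {K N s : ℕ} (h0 : Fin s → Fin K → ℂ) (x0 : Fin s → Fin N → ℂ)
    (d0 : Fin s → ℝ)
    (h : Fin s → Fin K → ℂ) (x : Fin s → Fin N → ℂ) : ℝ :=
  famFrob (fun i => Hmap h x i - Hmap h0 x0 i) / dtot d0

/-- Membership in `𝒩_F̃`. -/
def inNF {K N L s : ℕ} (b : Fin L → Fin K → ℂ) (a : Fin s → Fin L → Fin N → ℂ)
    (h0 : Fin s → Fin K → ℂ) (x0 : Fin s → Fin N → ℂ) (e : Fin L → ℂ)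
    (d0 : Fin s → ℝ) (ρ μ : ℝ) (dd : Fin s → ℝ) (ε : ℝ)
    (h : Fin s → Fin K → ℂ) (x : Fin s → Fin N → ℂ) : Prop :=
  Ftil b a h0 x0 e ρ μ dd h x ≤ ε ^ 2 * dtot d0 ^ 2 / (3 * (s : ℝ) * kappa d0 ^ 2) + vnormSq e

/-- The Local Restricted Isometry Property on `𝒩_d ∩ 𝒩_μ ∩ 𝒩_ε`. -/
def LocalRIP {K N L s : ℕ} (b : Fin L → Fin K → ℂ) (a : Fin s → Fin L → Fin N → ℂ)
    (h0 : Fin s → Fin K → ℂ) (x0 : Fin s → Fin N → ℂ)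
    (d0 : Fin s → ℝ) (μ ε : ℝ) : Prop :=
  ∀ (h : Fin s → Fin K → ℂ) (x : Fin s → Fin N → ℂ),
    inNd d0 h x → inNmu b d0 μ h → inNeps h0 x0 d0 ε h x →
      (2 / 3) * famFrobSq (fun i => Hmap h x i - Hmap h0 x0 i)
          ≤ vnormSq (calA b a fun i => Hmap h x i - Hmap h0 x0 i)
      ∧ vnormSq (calA b a fun i => Hmap h x i - Hmap h0 x0 i)
          ≤ (3 / 2) * famFrobSq (fun i => Hmap h x i - Hmap h0 x0 i)

/-- `α_{i1} = ⟨h_{i0}, hᵢ⟩ / d_{i0}`. -/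
def alpha1 {K s : ℕ} (h0 : Fin s → Fin K → ℂ) (d0 : Fin s → ℝ)
    (h : Fin s → Fin K → ℂ) (i : Fin s) : ℂ :=
  vinner (h0 i) (h i) / ((d0 i : ℝ) : ℂ)

/-- `α_{i2} = ⟨x_{i0}, xᵢ⟩ / d_{i0}`. -/
def alpha2 {N s : ℕ} (x0 : Fin s → Fin N → ℂ) (d0 : Fin s → ℝ)
    (x : Fin s → Fin N → ℂ) (i : Fin s) : ℂ :=
  vinner (x0 i) (x i) / ((d0 i : ℝ) : ℂ)

/-- `δ₀ = δ/10`. -/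
def delta0 {K N s : ℕ} (h0 : Fin s → Fin K → ℂ) (x0 : Fin s → Fin N → ℂ)
    (d0 : Fin s → ℝ) (h : Fin s → Fin K → ℂ) (x : Fin s → Fin N → ℂ) : ℝ :=
  deltaTot h0 x0 d0 h x / 10

/-- `αᵢ = (1−δ₀)α_{i1}` if `‖hᵢ‖ ≥ ‖xᵢ‖`, else `1/((1−δ₀) conj(α_{i2}))`. -/
def alphaC {K N s : ℕ} (h0 : Fin s → Fin K → ℂ) (x0 : Fin s → Fin N → ℂ)
    (d0 : Fin s → ℝ) (h : Fin s → Fin K → ℂ) (x : Fin s → Fin N → ℂ) (i : Fin s) : ℂ :=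
  if vnorm (x i) ≤ vnorm (h i)
  then ((1 - delta0 h0 x0 d0 h x : ℝ) : ℂ) * alpha1 h0 d0 h i
  else 1 / (((1 - delta0 h0 x0 d0 h x : ℝ) : ℂ) * conj (alpha2 x0 d0 x i))

/-- `Δhᵢ = hᵢ − αᵢ h_{i0}`. -/
def dh {K N s : ℕ} (h0 : Fin s → Fin K → ℂ) (x0 : Fin s → Fin N → ℂ)
    (d0 : Fin s → ℝ) (h : Fin s → Fin K → ℂ) (x : Fin s → Fin N → ℂ) (i : Fin s) :
    Fin K → ℂ :=
  fun k => h i k - alphaC h0 x0 d0 h x i * h0 i k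

/-- `Δxᵢ = xᵢ − conj(αᵢ)⁻¹ x_{i0}`. -/
def dx {K N s : ℕ} (h0 : Fin s → Fin K → ℂ) (x0 : Fin s → Fin N → ℂ)
    (d0 : Fin s → ℝ) (h : Fin s → Fin K → ℂ) (x : Fin s → Fin N → ℂ) (i : Fin s) :
    Fin N → ℂ :=
  fun j => x i j - (conj (alphaC h0 x0 d0 h x i))⁻¹ * x0 i j

/-- `σ²_max(h,x) = maxₗ Σᵢ |bₗ*hᵢ|² ‖xᵢ‖²`. -/
def sigmaMaxSq {K N L s : ℕ} (b : Fin L → Fin K → ℂ)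
    (h : Fin s → Fin K → ℂ) (x : Fin s → Fin N → ℂ) : ℝ :=
  ⨆ l : Fin L, ∑ i, ‖vinner (b l) (h i)‖ ^ 2 * vnormSq (x i)

/-- The rank-one bound (Lemma: `𝒜` on block-diagonal matrices with rank-1 blocks). -/
def RankOneBound {K N L s : ℕ} (b : Fin L → Fin K → ℂ)
    (a : Fin s → Fin L → Fin N → ℂ) : Prop :=
  ∀ (h : Fin s → Fin K → ℂ) (x : Fin s → Fin N → ℂ),
    vnormSq (calA b a (Hmap h x)) ≤
      4 / 3 * famFrobSq (Hmap h x)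
      + 2 * Real.sqrt (2 * (s : ℝ) * famFrobSq (Hmap h x) * sigmaMaxSq b h x
          * ((K : ℝ) + N) * Real.log L)
      + 8 * (s : ℝ) * sigmaMaxSq b h x * ((K : ℝ) + N) * Real.log L

/-- The subspace `Tᵢ = {h_{i0} v* + u x_{i0}*}`. -/
def Tspace {K N : ℕ} (h0i : Fin K → ℂ) (x0i : Fin N → ℂ) :
    Set (Matrix (Fin K) (Fin N) ℂ) :=
  {Z | ∃ (u : Fin K → ℂ) (v : Fin N → ℂ), Z = rankOne h0i v + rankOne u x0i}

/-- `P` is the orthogonal projection onto `Tᵢ` w.r.t. the Frobenius inner product. -/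
def IsFrobProj {K N : ℕ} (h0i : Fin K → ℂ) (x0i : Fin N → ℂ)
    (P : Matrix (Fin K) (Fin N) ℂ → Matrix (Fin K) (Fin N) ℂ) : Prop :=
  ∀ Z, P Z ∈ Tspace h0i x0i ∧ ∀ W ∈ Tspace h0i x0i, finner W (Z - P Z) = 0

/-- Operator norm of `𝒜ᵢ` from `(ℂ^{K×N}, ‖·‖_F)` to `(ℂ^L, ‖·‖)`. -/
def calAiOpNorm {K N L : ℕ} (b : Fin L → Fin K → ℂ) (a : Fin L → Fin N → ℂ) : ℝ :=
  sSup {r : ℝ | ∃ Z : Matrix (Fin K) (Fin N) ℂ, frob Z ≤ 1 ∧ r = vnorm (calAi b a Z)}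

/-- Operator norm of `𝒜` from block-diagonal matrices with `‖·‖_F` to `ℂ^L`. -/
def calAOpNorm {K N L s : ℕ} (b : Fin L → Fin K → ℂ)
    (a : Fin s → Fin L → Fin N → ℂ) : ℝ :=
  sSup {r : ℝ | ∃ Z : Fin s → Matrix (Fin K) (Fin N) ℂ, famFrob Z ≤ 1 ∧ r = vnorm (calA b a Z)}

/-- Norm of a stacked vector in `ℂ^{ns}`. -/
def stackNorm {n s : ℕ} (u : Fin s → Fin n → ℂ) : ℝ := Real.sqrt (∑ i, vnormSq (u i))

/-- Norm of a point `z = (h,x) ∈ ℂ^{s(K+N)}`. -/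
def pairNorm {K N s : ℕ} (u : Fin s → Fin K → ℂ) (v : Fin s → Fin N → ℂ) : ℝ :=
  Real.sqrt (∑ i, vnormSq (u i) + ∑ i, vnormSq (v i))

/-- `z + t • w` componentwise, `t` real. -/
def shiftV {n s : ℕ} (u w : Fin s → Fin n → ℂ) (t : ℝ) : Fin s → Fin n → ℂ :=
  fun i k => u i k + (t : ℂ) * w i k

/-- `σ_max(h) = maxₗ √(Σᵢ |bₗ*hᵢ|²)` (unit `xᵢ`'s). -/
def sigmaMaxU {K L s : ℕ} (b : Fin L → Fin K → ℂ) (h : Fin s → Fin K → ℂ) : ℝ :=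
  ⨆ l, Real.sqrt (∑ i, ‖vinner (b l) (h i)‖ ^ 2)



lemma vnormSq_nonneg {n : ℕ} (v : Fin n → ℂ) : 0 ≤ vnormSq v :=
  sum_nonneg fun _ _ => sq_nonneg _

lemma vnorm_nonneg {n : ℕ} (v : Fin n → ℂ) : 0 ≤ vnorm v := Real.sqrt_nonneg _

lemma vnorm_sq {n : ℕ} (v : Fin n → ℂ) : vnorm v ^ 2 = vnormSq v :=
  Real.sq_sqrt (vnormSq_nonneg v)

lemma vnorm_eq_norm {n : ℕ} (v : Fin n → ℂ) : vnorm v = ‖WithLp.toLp 2 v‖ := by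
  rw [EuclideanSpace.norm_eq]; rfl

lemma vinner_eq_inner {n : ℕ} (u v : Fin n → ℂ) :
    vinner u v = inner ℂ (WithLp.toLp 2 u) (WithLp.toLp 2 v) := by
  rw [PiLp.inner_apply]
  exact sum_congr rfl fun _ _ => mul_comm _ _

lemma norm_vinner_le {n : ℕ} (u v : Fin n → ℂ) : ‖vinner u v‖ ≤ vnorm u * vnorm v := by
  rw [vinner_eq_inner, vnorm_eq_norm, vnorm_eq_norm]
  exact norm_inner_le_norm _ _

lemma vinner_self {n : ℕ} (u : Fin n → ℂ) : vinner u u = (vnormSq u : ℂ) := by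
  simp [vinner, vnormSq, Complex.conj_mul']

lemma conj_vinner {n : ℕ} (u v : Fin n → ℂ) : conj (vinner u v) = vinner v u := by
  simp [vinner, mul_comm]

lemma vinner_add {n : ℕ} (u v w : Fin n → ℂ) : vinner u (v + w) = vinner u v + vinner u w := by
  simp [vinner, mul_add, sum_add_distrib]

lemma vinner_sub {n : ℕ} (u v w : Fin n → ℂ) : vinner u (v - w) = vinner u v - vinner u w := by
  simp [vinner, mul_sub, sum_sub_distrib]

lemma vinner_smul {n : ℕ} (c : ℂ) (u v : Fin n → ℂ) : vinner u (c • v) = c * vinner u v := by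
  simp [vinner, mul_sum, mul_left_comm]

lemma vinner_add_left {n : ℕ} (u v w : Fin n → ℂ) :
    vinner (u + v) w = vinner u w + vinner v w := by
  simp [vinner, add_mul, sum_add_distrib]

lemma vinner_sub_left {n : ℕ} (u v w : Fin n → ℂ) :
    vinner (u - v) w = vinner u w - vinner v w := by
  simp [vinner, sub_mul, sum_sub_distrib]

lemma vinner_smul_left {n : ℕ} (c : ℂ) (u v : Fin n → ℂ) :
    vinner (c • u) v = conj c * vinner u v := by
  simp [vinner, mul_sum, mul_assoc]

lemma vnorm_smul {n : ℕ} (c : ℂ) (u : Fin n → ℂ) : vnorm (c • u) = ‖c‖ * vnorm u := by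
  rw [vnorm_eq_norm, vnorm_eq_norm, ← norm_smul]; rfl

lemma eq_zero_of_vnorm {n : ℕ} {u : Fin n → ℂ} (hu : vnorm u = 0) : u = 0 := by
  rw [vnorm_eq_norm, norm_eq_zero] at hu
  simpa using hu

lemma frobSq_nonneg {K N : ℕ} (Z : Matrix (Fin K) (Fin N) ℂ) : 0 ≤ frobSq Z :=
  sum_nonneg fun _ _ => sum_nonneg fun _ _ => sq_nonneg _

lemma frob_sq {K N : ℕ} (Z : Matrix (Fin K) (Fin N) ℂ) : frob Z ^ 2 = frobSq Z :=
  Real.sq_sqrt (frobSq_nonneg Z)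

lemma vnorm_mulVec_le_frob {K N : ℕ} (Z : Matrix (Fin K) (Fin N) ℂ) (v : Fin N → ℂ) :
    vnorm (Z.mulVec v) ≤ frob Z * vnorm v := by
  apply Real.sqrt_le_iff.2 ⟨mul_nonneg (Real.sqrt_nonneg _) (vnorm_nonneg _), ?_⟩
  rw [mul_pow, Real.sq_sqrt (frobSq_nonneg Z), frobSq, sum_mul]
  refine sum_le_sum fun k _ => ?_
  have e : Z.mulVec v k = vinner (fun j => conj (Z k j)) v := by
    simp [Matrix.mulVec, dotProduct, vinner]
  have hk : ∑ j, ‖Z k j‖ ^ 2 = vnorm (fun j => conj (Z k j)) ^ 2 := by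
    simp [vnorm_sq, vnormSq]
  rw [e, hk, ← mul_pow]
  exact pow_le_pow_left₀ (norm_nonneg _) (norm_vinner_le _ _) 2

/-- The operator norm bounds the action of the matrix. -/
lemma vnorm_mulVec_le {K N : ℕ} (Z : Matrix (Fin K) (Fin N) ℂ) (v : Fin N → ℂ) :
    vnorm (Z.mulVec v) ≤ opNorm Z * vnorm v := by
  have key : ∀ v, vnorm v ≤ 1 → vnorm (Z.mulVec v) ≤ opNorm Z := by
    intro v hv
    refine le_csSup ⟨frob Z, ?_⟩ ⟨v, hv, rfl⟩
    rintro r ⟨v, hv, rfl⟩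
    exact (vnorm_mulVec_le_frob Z v).trans (mul_le_of_le_one_right (Real.sqrt_nonneg _) hv)
  rcases eq_or_ne (vnorm v) 0 with h0 | h0
  · rw [eq_zero_of_vnorm h0]
    simp [vnorm, vnormSq]
  · have hpos : 0 < vnorm v := lt_of_le_of_ne (vnorm_nonneg v) (Ne.symm h0)
    have := key ((((vnorm v)⁻¹ : ℝ) : ℂ) • v) (by
      rw [vnorm_smul, Complex.norm_real, Real.norm_of_nonneg (by positivity), inv_mul_cancel₀ h0])
    rw [Matrix.mulVec_smul, vnorm_smul, Complex.norm_real, Real.norm_of_nonneg (by positivity),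
      inv_mul_le_iff₀ hpos] at this
    linarith

lemma frobSq_rankOne_add {K N : ℕ} (p q : Fin K → ℂ) (u v : Fin N → ℂ) (huv : vinner u v = 0) :
    frobSq (rankOne p u + rankOne q v) = vnormSq p * vnormSq u + vnormSq q * vnormSq v := by
  have hvu : vinner v u = 0 := by rw [← conj_vinner, huv, map_zero]
  have h : (frobSq (rankOne p u + rankOne q v) : ℂ) =
      vinner p p * vinner u u + vinner q q * vinner v v
        + vinner p q * vinner v u + vinner q p * vinner u v := by
    simp only [frobSq, rankOne, vinner, sum_mul_sum]
    push_cast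
    simp only [← sum_add_distrib, ← Complex.conj_mul']
    refine sum_congr rfl fun k _ => sum_congr rfl fun j _ => ?_
    simp
    ring
  rw [huv, hvu] at h
  simp only [vinner_self, mul_zero, add_zero] at h
  exact_mod_cast h

/-- Trace duality for a difference of two rank-one matrices. -/
lemma norm_form_sub_le {K N : ℕ} (M : Matrix (Fin K) (Fin N) ℂ) (h h0 : Fin K → ℂ)
    (x x0 : Fin N → ℂ) :
    ‖vinner (M.mulVec x) h - vinner (M.mulVec x0) h0‖
      ≤ Real.sqrt 2 * opNorm M * frob (rankOne h x - rankOne h0 x0) := by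
  obtain ⟨c, hc⟩ : ∃ c : ℂ, vinner x0 (x - c • x0) = 0 := by
    by_cases hx : vnormSq x0 = 0
    · refine ⟨0, ?_⟩
      rw [eq_zero_of_vnorm (u := x0) (by simp [vnorm, hx])]
      simp [vinner]
    · refine ⟨vinner x0 x / vnormSq x0, ?_⟩
      rw [vinner_sub, vinner_smul, vinner_self, div_mul_cancel₀ _ (by exact_mod_cast hx), sub_self]
  set r := x - c • x0 with hr
  set p := conj c • h - h0 with hp
  have hx : x = c • x0 + r := by simp [hr]
  have e1 : rankOne h x - rankOne h0 x0 = rankOne p x0 + rankOne h r := by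
    ext k j
    simp [rankOne, hp, hr]
    ring
  have e2 : vinner (M.mulVec x) h - vinner (M.mulVec x0) h0
      = vinner (M.mulVec x0) p + vinner (M.mulVec r) h := by
    rw [hx, Matrix.mulVec_add, Matrix.mulVec_smul, vinner_add_left, vinner_smul_left, hp,
      vinner_sub, vinner_smul]
    ring
  have hM : 0 ≤ opNorm M := Real.sSup_nonneg (by rintro _ ⟨v, -, rfl⟩; exact vnorm_nonneg _)
  have b1 : ‖vinner (M.mulVec x0) p‖ ≤ opNorm M * (vnorm x0 * vnorm p) := by
    rw [← mul_assoc]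
    exact (norm_vinner_le _ _).trans
      (mul_le_mul_of_nonneg_right (vnorm_mulVec_le _ _) (vnorm_nonneg _))
  have b2 : ‖vinner (M.mulVec r) h‖ ≤ opNorm M * (vnorm r * vnorm h) := by
    rw [← mul_assoc]
    exact (norm_vinner_le _ _).trans
      (mul_le_mul_of_nonneg_right (vnorm_mulVec_le _ _) (vnorm_nonneg _))
  have b3 : vnorm x0 * vnorm p + vnorm r * vnorm h
      ≤ Real.sqrt 2 * frob (rankOne h x - rankOne h0 x0) := by
    rw [frob, ← Real.sqrt_mul (by norm_num)]
    apply Real.le_sqrt_of_sq_le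
    rw [e1, frobSq_rankOne_add _ _ _ _ hc, ← vnorm_sq, ← vnorm_sq, ← vnorm_sq, ← vnorm_sq]
    nlinarith [sq_nonneg (vnorm x0 * vnorm p - vnorm r * vnorm h)]
  rw [e2]
  calc _ ≤ _ := norm_add_le _ _
    _ ≤ opNorm M * (vnorm x0 * vnorm p + vnorm r * vnorm h) := by linarith
    _ ≤ opNorm M * (Real.sqrt 2 * frob (rankOne h x - rankOne h0 x0)) :=
        mul_le_mul_of_nonneg_left b3 hM
    _ = _ := by ring

lemma vinner_calAdj_mulVec {K N L : ℕ} (b : Fin L → Fin K → ℂ) (a : Fin L → Fin N → ℂ)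
    (z : Fin L → ℂ) (x : Fin N → ℂ) (w : Fin K → ℂ) :
    vinner ((calAdj b a z).mulVec x) w
      = ∑ l, conj (z l) * (vinner (b l) w * vinner x (a l)) := by
  simp only [vinner, calAdj, Matrix.mulVec, dotProduct, Matrix.of_apply, map_sum, map_mul,
    sum_mul, mul_sum, Complex.conj_conj]
  conv_lhs => rw [sum_comm]
  conv_rhs => rw [sum_comm]
  refine sum_congr rfl fun j _ => ?_
  rw [sum_comm]
  exact sum_congr rfl fun l _ => sum_congr rfl fun k _ => by ring

lemma vinner_calAdj_conjTranspose_mulVec {K N L : ℕ} (b : Fin L → Fin K → ℂ)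
    (a : Fin L → Fin N → ℂ) (z : Fin L → ℂ) (h : Fin K → ℂ) (w : Fin N → ℂ) :
    vinner ((calAdj b a z).conjTranspose.mulVec h) w
      = conj (vinner ((calAdj b a z).mulVec w) h) := by
  simp only [vinner, Matrix.mulVec, dotProduct, Matrix.conjTranspose_apply, map_sum, map_mul,
    sum_mul, Complex.conj_conj, Complex.star_def]
  rw [sum_comm]
  refine sum_congr rfl fun k _ => sum_congr rfl fun j _ => ?_
  ring

lemma calAi_rankOne {K N L : ℕ} (b : Fin L → Fin K → ℂ) (a : Fin L → Fin N → ℂ)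
    (h : Fin K → ℂ) (x : Fin N → ℂ) (l : Fin L) :
    calAi b a (rankOne h x) l = vinner (b l) h * vinner x (a l) := by
  simp only [calAi, vinner, rankOne, Matrix.mulVec, dotProduct, Matrix.of_apply, sum_mul, mul_sum]
  rw [sum_comm]
  refine sum_congr rfl fun k _ => sum_congr rfl fun j _ => ?_
  ring

lemma hasDerivAt_line (p q : ℂ) (t : ℝ) : HasDerivAt (fun t : ℝ => p + (t : ℂ) * q) q t := by
  simpa using ((Complex.ofRealCLM.hasDerivAt (x := t)).mul_const q).const_add p

lemma shiftV_apply {n s : ℕ} (u w : Fin s → Fin n → ℂ) (t : ℝ) (i : Fin s) :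
    shiftV u w t i = u i + (t : ℂ) • w i := rfl

lemma hasDerivAt_vinner_shiftV {n s : ℕ} (c : Fin n → ℂ) (u w : Fin s → Fin n → ℂ) (i : Fin s)
    (t : ℝ) : HasDerivAt (fun t => vinner c (shiftV u w t i)) (vinner c (w i)) t := by
  simp only [shiftV_apply, vinner_add, vinner_smul]
  exact hasDerivAt_line _ _ _

lemma hasDerivAt_vinner_shiftV_left {n s : ℕ} (c : Fin n → ℂ) (u w : Fin s → Fin n → ℂ)
    (i : Fin s) (t : ℝ) :
    HasDerivAt (fun t => vinner (shiftV u w t i) c) (vinner (w i) c) t := by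
  simp only [shiftV_apply, vinner_add_left, vinner_smul_left, Complex.conj_ofReal]
  exact hasDerivAt_line _ _ _

lemma hasDerivAt_norm_sq {f : ℝ → ℂ} {f' : ℂ} {t : ℝ} (hf : HasDerivAt f f' t) :
    HasDerivAt (fun t => ‖f t‖ ^ 2) (2 * (conj (f t) * f').re) t := by
  simpa [Complex.inner, mul_comm] using hf.norm_sq

lemma hasDerivAt_vnormSq_shiftV {n s : ℕ} (u w : Fin s → Fin n → ℂ) (i : Fin s) (t : ℝ) :
    HasDerivAt (fun t => vnormSq (shiftV u w t i))
      (2 * (vinner (shiftV u w t i) (w i)).re) t := by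
  simp only [vnormSq, vinner, Complex.re_sum, mul_sum]
  exact HasDerivAt.fun_sum fun k _ => hasDerivAt_norm_sq (hasDerivAt_line _ _ _)

lemma hasDerivAt_G0 (z : ℝ) : HasDerivAt G0 (G0' z) z := by
  refine hasDerivAt_of_hasDerivAt_of_ne' (x := 1) (f := G0) (g := G0') ?_ ?_ ?_ z
  · intro y hy
    rcases lt_or_gt_of_ne hy with h | h
    · have : G0' y = 0 := by simp [G0', max_eq_right (by linarith : y - 1 ≤ 0)]
      rw [this]
      refine (hasDerivAt_const y (0 : ℝ)).congr_of_eventuallyEq ?_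
      filter_upwards [gt_mem_nhds h] with v hv
      simp [G0, max_eq_right (by linarith : v - 1 ≤ 0)]
    · have h1 : HasDerivAt (fun v : ℝ => (v - 1) ^ 2) (G0' y) y := by
        simpa [G0', max_eq_left (by linarith : 0 ≤ y - 1)] using
          ((hasDerivAt_id y).sub_const 1).fun_pow 2
      refine h1.congr_of_eventuallyEq ?_
      filter_upwards [lt_mem_nhds h] with v hv
      simp [G0, max_eq_left (by linarith : 0 ≤ v - 1)]
  · unfold G0; fun_prop
  · unfold G0'; fun_prop

/-- Real inner product of two points of `ℂ^{s(K+N)}`. -/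
def pairInner {K N s : ℕ} (u : Fin s → Fin K → ℂ) (v : Fin s → Fin N → ℂ)
    (u' : Fin s → Fin K → ℂ) (v' : Fin s → Fin N → ℂ) : ℝ :=
  ∑ i, (vinner (u i) (u' i)).re + ∑ i, (vinner (v i) (v' i)).re

lemma sum_re_vinner_le {n s : ℕ} (u u' : Fin s → Fin n → ℂ) :
    ∑ i, (vinner (u i) (u' i)).re
      ≤ Real.sqrt (∑ i, vnormSq (u i)) * Real.sqrt (∑ i, vnormSq (u' i)) :=
  (sum_le_sum fun i _ => (Complex.re_le_norm _).trans (norm_vinner_le (u i) (u' i))).trans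
    (Real.sum_sqrt_mul_sqrt_le _ (fun _ => vnormSq_nonneg _) fun _ => vnormSq_nonneg _)

lemma pairInner_le {K N s : ℕ} (u : Fin s → Fin K → ℂ) (v : Fin s → Fin N → ℂ)
    (u' : Fin s → Fin K → ℂ) (v' : Fin s → Fin N → ℂ) :
    pairInner u v u' v' ≤ pairNorm u v * pairNorm u' v' := by
  have hn : ∀ {n : ℕ} (w : Fin s → Fin n → ℂ), 0 ≤ ∑ i, vnormSq (w i) :=
    fun w => sum_nonneg fun _ _ => vnormSq_nonneg _
  have := Real.sum_sqrt_mul_sqrt_le (univ : Finset (Fin 2))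
    (f := ![∑ i, vnormSq (u i), ∑ i, vnormSq (v i)])
    (g := ![∑ i, vnormSq (u' i), ∑ i, vnormSq (v' i)])
    (by intro i; fin_cases i <;> exact hn _) (by intro i; fin_cases i <;> exact hn _)
  simp only [Fin.sum_univ_two, Matrix.cons_val_zero, Matrix.cons_val_one] at this
  exact (add_le_add (sum_re_vinner_le u u') (sum_re_vinner_le v v')).trans this

lemma pairInner_self {K N s : ℕ} (u : Fin s → Fin K → ℂ) (v : Fin s → Fin N → ℂ) :
    pairInner u v u v = ∑ i, vnormSq (u i) + ∑ i, vnormSq (v i) := by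
  simp [pairInner, vinner_self]

lemma residual_eq {K N L s : ℕ} (b : Fin L → Fin K → ℂ) (a : Fin s → Fin L → Fin N → ℂ)
    (h0 : Fin s → Fin K → ℂ) (x0 : Fin s → Fin N → ℂ) (e : Fin L → ℂ)
    (h : Fin s → Fin K → ℂ) (x : Fin s → Fin N → ℂ) (l : Fin L) :
    residual b a h0 x0 e h x l
      = ∑ i, vinner (b l) (h i) * vinner (x i) (a i l) - yvec b a h0 x0 e l := by
  simp only [residual, calA, Hmap, calAi_rankOne]

lemma hasDerivAt_Fobj {K N L s : ℕ} (b : Fin L → Fin K → ℂ) (a : Fin s → Fin L → Fin N → ℂ)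
    (h0 : Fin s → Fin K → ℂ) (x0 : Fin s → Fin N → ℂ) (e : Fin L → ℂ)
    (h wh : Fin s → Fin K → ℂ) (x wx : Fin s → Fin N → ℂ) (t : ℝ) :
    HasDerivAt (fun t => Fobj b a h0 x0 e (shiftV h wh t) (shiftV x wx t))
      (2 * pairInner (gradFh b a h0 x0 e (shiftV h wh t) (shiftV x wx t))
        (gradFx b a h0 x0 e (shiftV h wh t) (shiftV x wx t)) wh wx) t := by
  have hr : ∀ l t, HasDerivAt (fun t => residual b a h0 x0 e (shiftV h wh t) (shiftV x wx t) l)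
      (∑ i, (vinner (b l) (wh i) * vinner (shiftV x wx t i) (a i l)
        + vinner (b l) (shiftV h wh t i) * vinner (wx i) (a i l))) t := by
    intro l t
    simp only [residual_eq]
    exact (HasDerivAt.fun_sum fun i _ => (hasDerivAt_vinner_shiftV _ _ _ _ _).mul
      (hasDerivAt_vinner_shiftV_left _ _ _ _ _)).sub_const _
  have hF := HasDerivAt.fun_sum (u := univ) fun l _ => hasDerivAt_norm_sq (hr l t)
  refine hF.congr_deriv ?_
  simp only [pairInner, gradFh, gradFx, vinner_calAdj_conjTranspose_mulVec,
    vinner_calAdj_mulVec, Complex.conj_re, ← Complex.re_sum, ← mul_sum, ← Complex.add_re,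
    ← sum_add_distrib]
  congr 2
  simp only [mul_sum]
  rw [sum_comm]
  exact sum_congr rfl fun i _ => sum_congr rfl fun l _ => by ring

lemma hasDerivAt_Gi {K N L s : ℕ} (b : Fin L → Fin K → ℂ) (ρ μ : ℝ) (dd : Fin s → ℝ)
    (h wh : Fin s → Fin K → ℂ) (x wx : Fin s → Fin N → ℂ) (i : Fin s) (t : ℝ) :
    HasDerivAt (fun t => Gi b ρ μ (dd i) (shiftV h wh t i) (shiftV x wx t i))
      (2 * ((vinner (gradGh b ρ μ dd (shiftV h wh t) i) (wh i)).re
        + (vinner (gradGx ρ dd (shiftV x wx t) i) (wx i)).re)) t := by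
  have h1 := (hasDerivAt_G0 _).comp t ((hasDerivAt_vnormSq_shiftV h wh i t).div_const (2 * dd i))
  have h2 := (hasDerivAt_G0 _).comp t ((hasDerivAt_vnormSq_shiftV x wx i t).div_const (2 * dd i))
  have h3 := HasDerivAt.fun_sum (u := univ) fun l _ => (hasDerivAt_G0 _).comp t
    (((hasDerivAt_norm_sq (hasDerivAt_vinner_shiftV (b l) h wh i t)).const_mul (L : ℝ)).div_const
      (8 * dd i * μ ^ 2))
  refine (((h1.add h2).add h3).const_mul ρ).congr_deriv ?_
  have e1 : (vinner (gradGh b ρ μ dd (shiftV h wh t) i) (wh i)).re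
      = ρ / (2 * dd i) * (G0' (vnormSq (shiftV h wh t i) / (2 * dd i))
          * (vinner (shiftV h wh t i) (wh i)).re
        + L / (4 * μ ^ 2) * ∑ l, G0' (L * ‖vinner (b l) (shiftV h wh t i)‖ ^ 2
            / (8 * dd i * μ ^ 2))
          * (conj (vinner (b l) (shiftV h wh t i)) * vinner (b l) (wh i)).re) := by
    have : gradGh b ρ μ dd (shiftV h wh t) i = ((ρ / (2 * dd i) : ℝ) : ℂ) •
        (((G0' (vnormSq (shiftV h wh t i) / (2 * dd i)) : ℝ) : ℂ) • shiftV h wh t i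
        + (((L : ℝ) / (4 * μ ^ 2) : ℝ) : ℂ) • ∑ l, ((G0' ((L : ℝ)
          * ‖vinner (b l) (shiftV h wh t i)‖ ^ 2 / (8 * dd i * μ ^ 2)) : ℝ) : ℂ)
          • (vinner (b l) (shiftV h wh t i) • b l)) := by
      funext k
      simp [gradGh, Finset.sum_apply]
    have hsum : ∀ (f : Fin L → Fin K → ℂ) (w : Fin K → ℂ),
        vinner (∑ l, f l) w = ∑ l, vinner (f l) w := by
      intro f w
      simp only [vinner, Finset.sum_apply, map_sum, sum_mul]
      exact sum_comm
    rw [this]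
    simp only [vinner_smul_left, vinner_add_left, hsum, Complex.conj_ofReal, Complex.re_ofReal_mul,
      Complex.add_re, Complex.re_sum]
  have e2 : (vinner (gradGx ρ dd (shiftV x wx t) i) (wx i)).re
      = ρ / (2 * dd i) * (G0' (vnormSq (shiftV x wx t i) / (2 * dd i))
          * (vinner (shiftV x wx t i) (wx i)).re) := by
    have : gradGx ρ dd (shiftV x wx t) i = ((ρ / (2 * dd i) : ℝ) : ℂ) •
        (((G0' (vnormSq (shiftV x wx t i) / (2 * dd i)) : ℝ) : ℂ) • shiftV x wx t i) := rfl
    rw [this]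
    simp only [vinner_smul_left, Complex.conj_ofReal, Complex.re_ofReal_mul]
  rw [e1, e2]
  have e3 : ∀ c z : Fin L → ℝ, ∑ l, c l * (L * (2 * z l) / (8 * dd i * μ ^ 2))
      = L / (8 * dd i * μ ^ 2) * 2 * ∑ l, c l * z l := by
    intro c z
    rw [mul_sum]
    exact sum_congr rfl fun l _ => by ring
  rw [e3]
  ring

lemma hasDerivAt_Ftil {K N L s : ℕ} (b : Fin L → Fin K → ℂ) (a : Fin s → Fin L → Fin N → ℂ)
    (h0 : Fin s → Fin K → ℂ) (x0 : Fin s → Fin N → ℂ) (e : Fin L → ℂ)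
    (ρ μ : ℝ) (dd : Fin s → ℝ)
    (h wh : Fin s → Fin K → ℂ) (x wx : Fin s → Fin N → ℂ) (t : ℝ) :
    HasDerivAt (fun t => Ftil b a h0 x0 e ρ μ dd (shiftV h wh t) (shiftV x wx t))
      (2 * pairInner (gradH b a h0 x0 e ρ μ dd (shiftV h wh t) (shiftV x wx t))
        (gradX b a h0 x0 e ρ μ dd (shiftV h wh t) (shiftV x wx t)) wh wx) t := by
  refine ((hasDerivAt_Fobj b a h0 x0 e h wh x wx t).add (HasDerivAt.fun_sum (u := univ)
    fun i _ => hasDerivAt_Gi b ρ μ dd h wh x wx i t)).congr_deriv ?_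
  have e1 : ∀ i, gradH b a h0 x0 e ρ μ dd (shiftV h wh t) (shiftV x wx t) i
      = gradFh b a h0 x0 e (shiftV h wh t) (shiftV x wx t) i
        + gradGh b ρ μ dd (shiftV h wh t) i := fun _ => rfl
  have e2 : ∀ i, gradX b a h0 x0 e ρ μ dd (shiftV h wh t) (shiftV x wx t) i
      = gradFx b a h0 x0 e (shiftV h wh t) (shiftV x wx t) i
        + gradGx ρ dd (shiftV x wx t) i := fun _ => rfl
  simp only [pairInner, e1, e2, vinner_add_left, Complex.add_re, sum_add_distrib, ← mul_sum]
  ring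

lemma one_le_kappa {s : ℕ} {d0 : Fin s → ℝ} (hs : 0 < s) (hd0 : ∀ i, 0 < d0 i) :
    1 ≤ kappa d0 := by
  have : Nonempty (Fin s) := ⟨⟨0, hs⟩⟩
  obtain ⟨i, hi⟩ := exists_eq_ciInf_of_finite (f := d0)
  rw [kappa, one_le_div (hi ▸ hd0 i), ← hi]
  exact le_ciSup (Set.finite_range d0).bddAbove i

lemma one_le_mul_kappa_sq {s : ℕ} {d0 : Fin s → ℝ} (hs : 0 < s) (hd0 : ∀ i, 0 < d0 i) :
    1 ≤ (s : ℝ) * kappa d0 ^ 2 :=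
  one_le_mul_of_one_le_of_one_le (by exact_mod_cast hs) (one_le_pow₀ (one_le_kappa hs hd0))

lemma dtot_sq {s : ℕ} (d0 : Fin s → ℝ) : dtot d0 ^ 2 = ∑ i, d0 i ^ 2 :=
  Real.sq_sqrt (sum_nonneg fun _ _ => sq_nonneg _)

lemma dtot_pos {s : ℕ} {d0 : Fin s → ℝ} (hs : 0 < s) (hd0 : ∀ i, 0 < d0 i) : 0 < dtot d0 :=
  Real.sqrt_pos.2 (sum_pos (fun i _ => pow_pos (hd0 i) 2) ⟨⟨0, hs⟩, mem_univ _⟩)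

lemma dtot_sq_div_le {s : ℕ} {d0 : Fin s → ℝ} (hs : 0 < s) (hd0 : ∀ i, 0 < d0 i) (i : Fin s) :
    dtot d0 ^ 2 / (s * kappa d0 ^ 2) ≤ d0 i ^ 2 := by
  have : Nonempty (Fin s) := ⟨⟨0, hs⟩⟩
  rw [div_le_iff₀ (lt_of_lt_of_le one_pos (one_le_mul_kappa_sq hs hd0)), dtot_sq]
  obtain ⟨j, hj⟩ := exists_eq_ciInf_of_finite (f := d0)
  have hmax : ∀ k, d0 k ≤ d0 i * kappa d0 := by
    intro k
    have h1 : d0 k ≤ ⨆ i, d0 i := le_ciSup (Set.finite_range d0).bddAbove k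
    have h2 : ⨅ i, d0 i ≤ d0 i := ciInf_le (Set.finite_range d0).bddBelow i
    have hm : 0 < ⨅ i, d0 i := hj ▸ hd0 j
    rw [kappa, mul_div_assoc', le_div_iff₀ hm, mul_comm (d0 i)]
    exact mul_le_mul h1 h2 hm.le ((hd0 k).le.trans h1)
  calc ∑ k, d0 k ^ 2 ≤ ∑ _k : Fin s, (d0 i * kappa d0) ^ 2 :=
        sum_le_sum fun k _ => pow_le_pow_left₀ (hd0 k).le (hmax k) 2
    _ = _ := by simp; ring

lemma G0_nonneg (z : ℝ) : 0 ≤ G0 z := sq_nonneg _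

lemma le_of_mul_G0_le {ρ D E z : ℝ} (hD : 0 < D) (hE : 0 ≤ E) (hρ : 0.81 * D + 2 * E ≤ ρ)
    (h : ρ * G0 z ≤ D / 675 + E) : z ≤ 20 / 11 := by
  by_contra! hz
  have h1 : (81 / 121 : ℝ) ≤ G0 z := by
    rw [G0, max_eq_left (by linarith)]
    nlinarith
  nlinarith

section Neighbourhoods

variable {K N L s : ℕ} (b : Fin L → Fin K → ℂ) (a : Fin s → Fin L → Fin N → ℂ)
  (h0 : Fin s → Fin K → ℂ) (x0 : Fin s → Fin N → ℂ) (e : Fin L → ℂ)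

lemma Fobj_nonneg (h : Fin s → Fin K → ℂ) (x : Fin s → Fin N → ℂ) :
    0 ≤ Fobj b a h0 x0 e h x := vnormSq_nonneg _

lemma Gi_nonneg {ρ : ℝ} (hρ : 0 ≤ ρ) (μ di : ℝ) (hi : Fin K → ℂ) (xi : Fin N → ℂ) :
    0 ≤ Gi b ρ μ di hi xi :=
  mul_nonneg hρ (add_nonneg (add_nonneg (G0_nonneg _) (G0_nonneg _))
    (sum_nonneg fun _ _ => G0_nonneg _))

lemma Greg_nonneg {ρ : ℝ} (hρ : 0 ≤ ρ) (μ : ℝ) (dd : Fin s → ℝ)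
    (h : Fin s → Fin K → ℂ) (x : Fin s → Fin N → ℂ) : 0 ≤ Greg b ρ μ dd h x :=
  sum_nonneg fun _ _ => Gi_nonneg b hρ _ _ _ _

lemma Gi_le_Ftil {ρ : ℝ} (hρ : 0 ≤ ρ) (μ : ℝ) (dd : Fin s → ℝ)
    (h : Fin s → Fin K → ℂ) (x : Fin s → Fin N → ℂ) (i : Fin s) :
    Gi b ρ μ (dd i) (h i) (x i) ≤ Ftil b a h0 x0 e ρ μ dd h x := by
  have h1 : Gi b ρ μ (dd i) (h i) (x i) ≤ Greg b ρ μ dd h x :=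
    single_le_sum (f := fun i => Gi b ρ μ (dd i) (h i) (x i))
      (fun i _ => Gi_nonneg b hρ μ (dd i) (h i) (x i)) (mem_univ i)
  have h2 := Fobj_nonneg b a h0 x0 e h x
  unfold Ftil
  linarith

variable {b a h0 x0 e} {d0 : Fin s → ℝ} {μ ρ d ε : ℝ} {dd : Fin s → ℝ}

/-- The sublevel set `𝒩_F̃` is contained in `𝒩_d ∩ 𝒩_μ`. -/
lemma inNd_and_inNmu_of_inNF (hs : 0 < s) (hd0 : ∀ i, 0 < d0 i) (hμ : 0 < μ) (hε : 0 < ε)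
    (hε15 : ε ≤ 1 / 15) (hdd : ∀ i, 0.9 * d0 i ≤ dd i ∧ dd i ≤ 1.1 * d0 i)
    (hdlow : 0.9 * dtot d0 ≤ d) (hρ : d ^ 2 + 2 * vnormSq e ≤ ρ)
    {h : Fin s → Fin K → ℂ} {x : Fin s → Fin N → ℂ}
    (hF : inNF b a h0 x0 e d0 ρ μ dd ε h x) : inNd d0 h x ∧ inNmu b d0 μ h := by
  have hD : 0 < dtot d0 ^ 2 := pow_pos (dtot_pos hs hd0) 2
  have hE := vnormSq_nonneg e
  have hd2 : 0.81 * dtot d0 ^ 2 ≤ d ^ 2 := by nlinarith [dtot_pos hs hd0]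
  have hρ0 : 0 ≤ ρ := by nlinarith
  have hbound : ε ^ 2 * dtot d0 ^ 2 / (3 * (s : ℝ) * kappa d0 ^ 2) ≤ dtot d0 ^ 2 / 675 := by
    have h1 := one_le_mul_kappa_sq hs hd0
    rw [div_le_iff₀ (by nlinarith)]
    have h2 : ε ^ 2 ≤ 1 / 225 := by nlinarith
    nlinarith [mul_le_mul_of_nonneg_right h2 hD.le, mul_le_mul_of_nonneg_left h1 hD.le]
  have hG : ∀ i, Gi b ρ μ (dd i) (h i) (x i) ≤ dtot d0 ^ 2 / 675 + vnormSq e := fun i =>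
    ((Gi_le_Ftil b a h0 x0 e hρ0 μ dd h x i).trans hF).trans (by linarith)
  have hz : ∀ z, ρ * G0 z ≤ dtot d0 ^ 2 / 675 + vnormSq e → z ≤ 20 / 11 := fun z =>
    le_of_mul_G0_le hD hE (by linarith)
  have hsum0 : ∀ i, 0 ≤ ∑ l, G0 ((L : ℝ) * ‖vinner (b l) (h i)‖ ^ 2 / (8 * dd i * μ ^ 2)) :=
    fun i => sum_nonneg fun _ _ => G0_nonneg _
  have hball : ∀ {n : ℕ} (v : Fin n → ℂ) i, vnormSq v / (2 * dd i) ≤ 20 / 11 →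
      vnorm v ≤ 2 * Real.sqrt (d0 i) := by
    intro n v i hv
    have := hd0 i
    have := hdd i
    rw [div_le_iff₀ (by linarith)] at hv
    rw [← pow_le_pow_iff_left₀ (vnorm_nonneg _) (by positivity) two_ne_zero, mul_pow,
      Real.sq_sqrt (hd0 i).le, vnorm_sq]
    linarith
  refine ⟨fun i => ⟨hball _ i (hz _ (le_trans ?_ (hG i))), hball _ i (hz _ (le_trans ?_ (hG i)))⟩,
    fun i l => ?_⟩
  · refine mul_le_mul_of_nonneg_left ?_ hρ0
    linarith [hsum0 i, G0_nonneg (vnormSq (x i) / (2 * dd i))]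
  · refine mul_le_mul_of_nonneg_left ?_ hρ0
    linarith [hsum0 i, G0_nonneg (vnormSq (h i) / (2 * dd i))]
  · have hl := hz ((L : ℝ) * ‖vinner (b l) (h i)‖ ^ 2 / (8 * dd i * μ ^ 2)) (by
      refine le_trans (mul_le_mul_of_nonneg_left ?_ hρ0) (hG i)
      have := single_le_sum (f := fun l => G0 ((L : ℝ) * ‖vinner (b l) (h i)‖ ^ 2
        / (8 * dd i * μ ^ 2))) (fun _ _ => G0_nonneg _) (mem_univ l)
      linarith [G0_nonneg (vnormSq (x i) / (2 * dd i)), G0_nonneg (vnormSq (h i) / (2 * dd i))])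
    have hdi := hd0 i
    have hddi := hdd i
    have hμ2 : 0 < μ ^ 2 := by positivity
    have hdpos : 0 < dd i := by linarith
    rw [div_le_iff₀ (by positivity)] at hl
    rw [← pow_le_pow_iff_left₀ (by positivity) (by positivity) two_ne_zero, mul_pow, mul_pow,
      mul_pow, Real.sq_sqrt (hd0 i).le, Real.sq_sqrt (Nat.cast_nonneg _)]
    nlinarith [mul_le_mul_of_nonneg_right hddi.2 hμ2.le]

lemma vnormSq_sub {n : ℕ} (u v : Fin n → ℂ) :
    vnormSq (fun l => u l - v l) = vnormSq u - 2 * (vinner v u).re + vnormSq v := by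
  have h : (vnormSq (fun l => u l - v l) : ℂ)
      = vnormSq u - (vinner v u + conj (vinner v u)) + vnormSq v := by
    rw [conj_vinner, ← vinner_self, ← vinner_self, ← vinner_self]
    change vinner (u - v) (u - v) = _
    rw [vinner_sub, vinner_sub_left, vinner_sub_left]
    ring
  rw [Complex.add_conj] at h
  exact_mod_cast h

lemma calA_Hmap_sub (h : Fin s → Fin K → ℂ) (x : Fin s → Fin N → ℂ) (l : Fin L) :
    calA b a (fun i => Hmap h x i - Hmap h0 x0 i) l
      = calA b a (Hmap h x) l - calA b a (Hmap h0 x0) l := by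
  simp only [calA, calAi, Matrix.sub_mulVec, vinner_sub, sum_sub_distrib]

lemma Fobj_eq (h : Fin s → Fin K → ℂ) (x : Fin s → Fin N → ℂ) :
    Fobj b a h0 x0 e h x = vnormSq (calA b a fun i => Hmap h x i - Hmap h0 x0 i)
      - 2 * (vinner e (calA b a fun i => Hmap h x i - Hmap h0 x0 i)).re + vnormSq e := by
  rw [← vnormSq_sub, Fobj]
  congr 1
  funext l
  rw [calA_Hmap_sub, yvec]
  ring

/-- The noise correlates with `ℋ(h,x) − X₀` at most through `‖𝒜*(e)‖`. -/
lemma re_vinner_calA_le (h : Fin s → Fin K → ℂ) (x : Fin s → Fin N → ℂ) :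
    (vinner e (calA b a fun i => Hmap h x i - Hmap h0 x0 i)).re
      ≤ Real.sqrt 2 * AadjNorm b a e * ∑ i, frob (Hmap h x i - Hmap h0 x0 i) := by
  have h1 : vinner e (calA b a fun i => Hmap h x i - Hmap h0 x0 i)
      = ∑ i, (vinner ((calAdj b (a i) e).mulVec (x i)) (h i)
        - vinner ((calAdj b (a i) e).mulVec (x0 i)) (h0 i)) := by
    simp only [vinner_calAdj_mulVec, ← sum_sub_distrib, ← mul_sub, ← calAi_rankOne]
    rw [sum_comm]
    simp only [vinner, calA_Hmap_sub]
    simp only [calA, Hmap, ← mul_sum, sum_sub_distrib]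
  rw [h1, mul_sum]
  refine (Complex.re_le_norm _).trans ((norm_sum_le _ _).trans (sum_le_sum fun i _ => ?_))
  refine (norm_form_sub_le _ _ _ _ _).trans ?_
  refine mul_le_mul_of_nonneg_right (mul_le_mul_of_nonneg_left ?_ (Real.sqrt_nonneg _))
    (Real.sqrt_nonneg _)
  exact le_ciSup (f := fun i => opNorm (calAdj b (a i) e)) (Set.finite_range _).bddAbove i

/-- On `𝒩_ε ∩ 𝒩_F̃` the constraint defining `𝒩_ε` is inactive. -/
lemma deltaI_lt_of_inNF (hs : 0 < s) (hd0 : ∀ i, 0 < d0 i) (hμ : 0 < μ) (hε : 0 < ε)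
    (hε15 : ε ≤ 1 / 15) (hdd : ∀ i, 0.9 * d0 i ≤ dd i ∧ dd i ≤ 1.1 * d0 i)
    (hdlow : 0.9 * dtot d0 ≤ d) (hρ : d ^ 2 + 2 * vnormSq e ≤ ρ)
    (hRIP : LocalRIP b a h0 x0 d0 μ ε)
    (hAe : AadjNorm b a e ≤ ε * dtot d0 / (10 * Real.sqrt 2 * (s : ℝ) * kappa d0))
    {h : Fin s → Fin K → ℂ} {x : Fin s → Fin N → ℂ} (hzε : inNeps h0 x0 d0 ε h x)
    (hF : inNF b a h0 x0 e d0 ρ μ dd ε h x) (i : Fin s) :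
    deltaI (h0 i) (x0 i) (d0 i) (h i) (x i) < ε := by
  obtain ⟨hNd, hNmu⟩ := inNd_and_inNmu_of_inNF hs hd0 hμ hε hε15 hdd hdlow hρ hF
  have hlow := (hRIP h x hNd hNmu hzε).1
  have hρ0 : 0 ≤ ρ := by nlinarith [vnormSq_nonneg e]
  have hG := Greg_nonneg b hρ0 μ dd h x
  have hs0 : (0 : ℝ) < s := by exact_mod_cast hs
  have hκ : 0 < kappa d0 := lt_of_lt_of_le one_pos (one_le_kappa hs hd0)
  have hDpos := dtot_pos hs hd0
  set Δ := famFrobSq (fun i => Hmap h x i - Hmap h0 x0 i) with hΔ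
  set S := ∑ i, frob (Hmap h x i - Hmap h0 x0 i) with hS
  have hS0 : 0 ≤ S := sum_nonneg fun _ _ => Real.sqrt_nonneg _
  have hSΔ : S ^ 2 ≤ s * Δ := by
    have := sq_sum_le_card_mul_sum_sq (s := (univ : Finset (Fin s)))
      (f := fun i => frob (Hmap h x i - Hmap h0 x0 i))
    simpa [frob_sq, hΔ, famFrobSq] using this
  set E := ε * dtot d0 / kappa d0 with hE
  have hEpos : 0 < E := by positivity
  have hnoise : 2 * (vinner e (calA b a fun i => Hmap h x i - Hmap h0 x0 i)).re
      ≤ E / (5 * s) * S := by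
    have h1 := re_vinner_calA_le (b := b) (a := a) (h0 := h0) (x0 := x0) (e := e) h x
    have h2 := mul_le_mul_of_nonneg_right
      (mul_le_mul_of_nonneg_left hAe (Real.sqrt_nonneg 2)) hS0
    have h3 : Real.sqrt 2 * (ε * dtot d0 / (10 * Real.sqrt 2 * (s : ℝ) * kappa d0)) * S
        = E / (10 * s) * S := by
      rw [hE]
      field_simp
    have h4 : E / (5 * s) * S = 2 * (E / (10 * s) * S) := by
      field_simp
      ring
    rw [h4, ← h3]
    linarith
  have hQ : ε ^ 2 * dtot d0 ^ 2 / (3 * (s : ℝ) * kappa d0 ^ 2) = E ^ 2 / s / 3 := by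
    rw [hE]
    field_simp
  have hamgm : E / (5 * s) * S ≤ E ^ 2 / s / 10 + Δ / 10 := by
    have h1 : E / (5 * s) * S ≤ (E ^ 2 + S ^ 2) / (10 * s) := by
      rw [div_mul_eq_mul_div, div_le_div_iff₀ (by positivity) (by positivity)]
      nlinarith [mul_nonneg hs0.le (sq_nonneg (E - S))]
    have h2 : (E ^ 2 + S ^ 2) / (10 * s) ≤ (E ^ 2 + s * Δ) / (10 * s) := by gcongr
    have h3 : (E ^ 2 + s * Δ) / (10 * s) = E ^ 2 / s / 10 + Δ / 10 := by field_simp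
    linarith
  have hΔlt : Δ < E ^ 2 / s := by
    have hQpos : 0 < E ^ 2 / s := by positivity
    rw [inNF, Ftil, Fobj_eq, hQ] at hF
    linarith
  have hEi : E ^ 2 / s ≤ (ε * d0 i) ^ 2 := by
    have h1 := mul_le_mul_of_nonneg_left (dtot_sq_div_le hs hd0 i) (sq_nonneg ε)
    have h2 : E ^ 2 / s = ε ^ 2 * (dtot d0 ^ 2 / (s * kappa d0 ^ 2)) := by
      rw [hE]
      field_simp
    rw [h2, mul_pow]
    exact h1
  have hi : frobSq (rankOne (h i) (x i) - rankOne (h0 i) (x0 i)) ≤ Δ :=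
    single_le_sum (f := fun i => frobSq (Hmap h x i - Hmap h0 x0 i))
      (fun _ _ => frobSq_nonneg _) (mem_univ i)
  rw [deltaI, div_lt_iff₀ (hd0 i), frob, Real.sqrt_lt' (mul_pos hε (hd0 i))]
  linarith

end Neighbourhoods

lemma eventually_lt_of_hasDerivAt_neg {f : ℝ → ℝ} {f' t : ℝ} (hf : HasDerivAt f f' t)
    (hneg : f' < 0) : ∀ᶠ u in nhdsWithin t (Set.Ioi t), f u < f t := by
  have h1 := (hasDerivWithinAt_iff_tendsto_slope' (Set.self_notMem_Ioi)).1
    (hf.hasDerivWithinAt (s := Set.Ioi t))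
  filter_upwards [h1.eventually_lt_const hneg, self_mem_nhdsWithin] with u hu htu
  rw [slope_def_field, div_lt_iff₀ (sub_pos.2 htu), zero_mul] at hu
  linarith

/-- Descent along a segment when the derivative bound at `T` is only known once the segment up
to `T` lies in a closed region, relatively open in the sublevel set. -/
lemma descent_on_segment {φ φ' : ℝ → ℝ} {D : Set ℝ} {c η C W : ℝ}
    (hφ : ∀ t, HasDerivAt φ (φ' t) t) (hD : IsClosed D)
    (hopen : ∀ t ∈ D, φ t ≤ c → D ∈ nhds t) (h0 : 0 ∈ D) (hc : φ 0 ≤ c)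
    (hη : 0 ≤ η) (hC : 0 < C) (hCη : C * η ≤ 1) (hW : 0 < W)
    (hstep : ∀ T ∈ Set.Icc 0 η,
      (∀ r ∈ Set.Icc (0 : ℝ) 1, r * T ∈ D ∧ φ (r * T) ≤ c) → φ' T ≤ -(2 * W * (1 - C * T))) :
    η ∈ D ∧ φ η ≤ c ∧ φ η ≤ φ 0 - η * W := by
  have hcont : Continuous φ := continuous_iff_continuousAt.2 fun t => (hφ t).continuousAt
  set S : Set ℝ := {T | ∀ r ∈ Set.Icc (0 : ℝ) 1, r * T ∈ D ∧ φ (r * T) ≤ c} with hS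
  have hSclosed : IsClosed S := by
    have : S = ⋂ r ∈ Set.Icc (0 : ℝ) 1, {T | r * T ∈ D ∧ φ (r * T) ≤ c} := by
      ext T; simp [hS]
    rw [this]
    refine isClosed_biInter fun r _ => ?_
    exact (hD.preimage (continuous_const_mul r)).inter
      (isClosed_le (hcont.comp (continuous_const_mul r)) continuous_const)
  have hsub : Set.Icc 0 η ⊆ S := by
    refine IsClosed.Icc_subset_of_forall_exists_gt (hSclosed.inter isClosed_Icc)
      (by simp [hS, h0, hc]) ?_
    rintro T ⟨hTS, hT0, hTη⟩ y hy
    have hT : T ∈ D ∧ φ T ≤ c := by simpa using hTS 1 (by simp)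
    have hneg : φ' T < 0 := by
      have h1 : C * T < 1 := lt_of_lt_of_le (mul_lt_mul_of_pos_left hTη hC) hCη
      have h2 := hstep T ⟨hT0, hTη.le⟩ hTS
      have h3 : 0 < 2 * W * (1 - C * T) := by
        have : 0 < 1 - C * T := by linarith
        positivity
      linarith
    have hev : ∀ᶠ u in nhdsWithin T (Set.Ioi T), u ∈ D ∧ φ u ≤ c := by
      filter_upwards [eventually_lt_of_hasDerivAt_neg (hφ T) hneg,
        nhdsWithin_le_nhds (hopen T hT.1 hT.2)] with u hu huD
      exact ⟨huD, hu.le.trans hT.2⟩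
    obtain ⟨w, hw, hIoo⟩ := mem_nhdsGT_iff_exists_Ioo_subset.1 hev
    obtain ⟨z, hTz, hz⟩ := _root_.exists_between (lt_min hw (Set.mem_Ioi.1 hy))
    have hzw := hz.trans_le (min_le_left _ _)
    refine ⟨z, fun r hr => ?_, hTz, (hz.trans_le (min_le_right _ _)).le⟩
    have hz0 : 0 < z := hT0.trans_lt hTz
    rcases le_or_gt (r * z) T with hrz | hrz
    · rcases hT0.eq_or_lt with hT0 | hT0
      · have : r * z = 0 := le_antisymm (hT0 ▸ hrz) (mul_nonneg hr.1 hz0.le)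
        rw [this]
        exact ⟨h0, hc⟩
      · have := hTS (r * z / T) ⟨div_nonneg (mul_nonneg hr.1 hz0.le) hT0.le,
          (div_le_one hT0).2 hrz⟩
        rwa [div_mul_cancel₀ _ hT0.ne'] at this
    · exact hIoo ⟨hrz, (mul_le_of_le_one_left hz0.le hr.2).trans_lt hzw⟩
  have hend : η ∈ D ∧ φ η ≤ c := by simpa using hsub (Set.right_mem_Icc.2 hη) 1 (by simp)
  refine ⟨hend.1, hend.2, ?_⟩
  have hψ : ∀ t, HasDerivAt (fun t => φ t + (2 * W * t - W * C * t ^ 2))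
      (φ' t + 2 * W * (1 - C * t)) t := by
    intro t
    refine ((hφ t).add (((hasDerivAt_id t).const_mul (2 * W)).sub
      (((hasDerivAt_id t).fun_pow 2).const_mul (W * C)))).congr_deriv ?_
    simp
    ring
  have hanti : AntitoneOn (fun t => φ t + (2 * W * t - W * C * t ^ 2)) (Set.Icc 0 η) := by
    refine antitoneOn_of_deriv_nonpos (convex_Icc _ _)
      (fun t _ => (hψ t).continuousAt.continuousWithinAt)
      (fun t _ => (hψ t).differentiableAt.differentiableWithinAt) fun t ht => ?_
    have ht := interior_subset ht
    rw [(hψ t).deriv]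
    linarith [hstep t ht (hsub ht)]
  have hle := hanti (Set.left_mem_Icc.2 hη) (Set.right_mem_Icc.2 hη) hη
  simp only [mul_zero, sub_zero, add_zero, ne_eq, OfNat.ofNat_ne_zero, not_false_eq_true,
    zero_pow] at hle
  nlinarith [mul_le_mul_of_nonneg_left hCη (mul_nonneg hW.le hη)]

lemma continuous_deltaI_shiftV {K N s : ℕ} (h0 wh h : Fin s → Fin K → ℂ)
    (x0 wx x : Fin s → Fin N → ℂ) (d0 : Fin s → ℝ) (i : Fin s) :
    Continuous fun t => deltaI (h0 i) (x0 i) (d0 i) (shiftV h wh t i) (shiftV x wx t i) := by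
  simp only [deltaI, frob, frobSq, rankOne, shiftV, Matrix.sub_apply, Matrix.of_apply]
  fun_prop

lemma shiftV_smul {n s : ℕ} (u w : Fin s → Fin n → ℂ) (r T : ℝ) :
    shiftV u (fun i k => (T : ℂ) * w i k) r = shiftV u w (r * T) := by
  funext i k
  simp [shiftV, mul_assoc]

lemma pairNorm_smul {K N s : ℕ} {T : ℝ} (hT : 0 ≤ T) (u : Fin s → Fin K → ℂ)
    (v : Fin s → Fin N → ℂ) :
    pairNorm (fun i k => (T : ℂ) * u i k) (fun i k => (T : ℂ) * v i k) = T * pairNorm u v := by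
  have hv : ∀ {n : ℕ} (w : Fin n → ℂ), vnormSq (fun k => (T : ℂ) * w k) = T ^ 2 * vnormSq w := by
    intro n w
    simp [vnormSq, mul_pow, mul_sum]
  simp only [pairNorm, hv, ← mul_sum, ← mul_add]
  rw [Real.sqrt_mul (sq_nonneg T), Real.sqrt_sq hT]

lemma pairInner_sub_left {K N s : ℕ} (u u' w : Fin s → Fin K → ℂ) (v v' z : Fin s → Fin N → ℂ) :
    pairInner (fun i k => u i k - u' i k) (fun i k => v i k - v' i k) w z
      = pairInner u v w z - pairInner u' v' w z := by
  have h : ∀ {n : ℕ} (p q r : Fin n → ℂ),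
      vinner (fun k => p k - q k) r = vinner p r - vinner q r := fun p q r => vinner_sub_left p q r
  simp only [pairInner, h, Complex.sub_re, sum_sub_distrib]
  ring

lemma pairInner_neg_right {K N s : ℕ} (u w : Fin s → Fin K → ℂ) (v z : Fin s → Fin N → ℂ) :
    pairInner u v (fun i k => -w i k) (fun i k => -z i k) = -pairInner u v w z := by
  simp [pairInner, vinner]
  ring

lemma pairNorm_neg {K N s : ℕ} (u : Fin s → Fin K → ℂ) (v : Fin s → Fin N → ℂ) :
    pairNorm (fun i k => -u i k) (fun i k => -v i k) = pairNorm u v := by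
  simp [pairNorm, vnormSq]

lemma eq_zero_of_sum_vnormSq {n s : ℕ} {u : Fin s → Fin n → ℂ} (hu : ∑ i, vnormSq (u i) = 0) :
    u = 0 := by
  funext i
  have := (sum_eq_zero_iff_of_nonneg fun i _ => vnormSq_nonneg (u i)).1 hu i (mem_univ i)
  exact eq_zero_of_vnorm (by simp [vnorm, this])

/-- one gradient descent step stays in `𝒩_ε ∩ 𝒩_F̃` and decreases `F̃`. -/
theorem statement3
    {K N L s : ℕ} (hK : 0 < K) (hN : 0 < N) (hL : 0 < L) (hs : 0 < s)
    (b : Fin L → Fin K → ℂ) (hb : BtBeqI b)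
    (a : Fin s → Fin L → Fin N → ℂ)
    (h0 : Fin s → Fin K → ℂ) (x0 : Fin s → Fin N → ℂ)
    (d0 : Fin s → ℝ) (hd0 : ∀ i, 0 < d0 i)
    (hh0 : ∀ i, vnorm (h0 i) = Real.sqrt (d0 i))
    (hx0 : ∀ i, vnorm (x0 i) = Real.sqrt (d0 i))
    (e : Fin L → ℂ) (μ ρ d ε : ℝ) (dd : Fin s → ℝ)
    (hμ : 0 < μ) (hε : 0 < ε) (hε15 : ε ≤ 1 / 15)
    (hdd : ∀ i, 0.9 * d0 i ≤ dd i ∧ dd i ≤ 1.1 * d0 i)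
    (hdlow : 0.9 * dtot d0 ≤ d) (hdhigh : d ≤ 1.1 * dtot d0)
    (hρ : d ^ 2 + 2 * vnormSq e ≤ ρ)
    (hRIP : LocalRIP b a h0 x0 d0 μ ε)
    (hAe : AadjNorm b a e ≤ ε * dtot d0 / (10 * Real.sqrt 2 * (s : ℝ) * kappa d0))
    (CL η : ℝ) (hCL : 0 < CL) (hη0 : 0 < η) (hηCL : η ≤ 1 / CL)
    (hLip : ∀ (h : Fin s → Fin K → ℂ) (x : Fin s → Fin N → ℂ)
        (wh : Fin s → Fin K → ℂ) (wx : Fin s → Fin N → ℂ),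
      (∀ τ : ℝ, τ ∈ Set.Icc (0 : ℝ) 1 →
        inNeps h0 x0 d0 ε (shiftV h wh τ) (shiftV x wx τ) ∧
        inNF b a h0 x0 e d0 ρ μ dd ε (shiftV h wh τ) (shiftV x wx τ)) →
      ∀ t : ℝ, t ∈ Set.Icc (0 : ℝ) 1 →
        Real.sqrt (gradDiffNormSq b a h0 x0 e ρ μ dd h x (shiftV h wh t) (shiftV x wx t))
          ≤ CL * t * pairNorm wh wx)
    (h : Fin s → Fin K → ℂ) (x : Fin s → Fin N → ℂ)
    (hzε : inNeps h0 x0 d0 ε h x) (hzF : inNF b a h0 x0 e d0 ρ μ dd ε h x) :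
    inNeps h0 x0 d0 ε
        (fun i k => h i k - (η : ℂ) * gradH b a h0 x0 e ρ μ dd h x i k)
        (fun i j => x i j - (η : ℂ) * gradX b a h0 x0 e ρ μ dd h x i j)
    ∧ inNF b a h0 x0 e d0 ρ μ dd ε
        (fun i k => h i k - (η : ℂ) * gradH b a h0 x0 e ρ μ dd h x i k)
        (fun i j => x i j - (η : ℂ) * gradX b a h0 x0 e ρ μ dd h x i j)
    ∧ Ftil b a h0 x0 e ρ μ dd
        (fun i k => h i k - (η : ℂ) * gradH b a h0 x0 e ρ μ dd h x i k)
        (fun i j => x i j - (η : ℂ) * gradX b a h0 x0 e ρ μ dd h x i j)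
      ≤ Ftil b a h0 x0 e ρ μ dd h x - η * gradNormSq b a h0 x0 e ρ μ dd h x := by
  set gh := gradH b a h0 x0 e ρ μ dd h x with hgh
  set gx := gradX b a h0 x0 e ρ μ dd h x with hgx
  set W := gradNormSq b a h0 x0 e ρ μ dd h x with hWdef
  have hWsum : W = ∑ i, vnormSq (gh i) + ∑ i, vnormSq (gx i) := rfl
  have hgh0 : 0 ≤ ∑ i, vnormSq (gh i) := sum_nonneg fun _ _ => vnormSq_nonneg _
  have hgx0 : 0 ≤ ∑ i, vnormSq (gx i) := sum_nonneg fun _ _ => vnormSq_nonneg _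
  rcases (show 0 ≤ W by linarith).eq_or_lt with hW | hW
  · have h1 : gh = 0 := eq_zero_of_sum_vnormSq (by linarith)
    have h2 : gx = 0 := eq_zero_of_sum_vnormSq (by linarith)
    rw [h1, h2, ← hW]
    simpa using ⟨hzε, hzF⟩
  set wh : Fin s → Fin K → ℂ := fun i k => -gh i k with hwh
  set wx : Fin s → Fin N → ℂ := fun i j => -gx i j with hwx
  have eh : (fun i k => h i k - (η : ℂ) * gh i k) = shiftV h wh η := by
    funext i k
    simp [shiftV, hwh, sub_eq_add_neg]
  have ex : (fun i j => x i j - (η : ℂ) * gx i j) = shiftV x wx η := by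
    funext i j
    simp [shiftV, hwx, sub_eq_add_neg]
  have eh0 : shiftV h wh 0 = h := by funext i k; simp [shiftV]
  have ex0 : shiftV x wx 0 = x := by funext i k; simp [shiftV]
  have hnorm : pairNorm wh wx ^ 2 = W := by
    rw [pairNorm_neg, pairNorm, Real.sq_sqrt (by linarith), hWsum]
  rw [eh, ex]
  have hdelta : ∀ i, Continuous fun t =>
      deltaI (h0 i) (x0 i) (d0 i) (shiftV h wh t i) (shiftV x wx t i) :=
    fun i => continuous_deltaI_shiftV h0 wh h x0 wx x d0 i
  have main := descent_on_segment
    (φ := fun t => Ftil b a h0 x0 e ρ μ dd (shiftV h wh t) (shiftV x wx t))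
    (D := {t | inNeps h0 x0 d0 ε (shiftV h wh t) (shiftV x wx t)})
    (c := ε ^ 2 * dtot d0 ^ 2 / (3 * (s : ℝ) * kappa d0 ^ 2) + vnormSq e)
    (η := η) (C := CL) (W := W)
    (hasDerivAt_Ftil b a h0 x0 e ρ μ dd h wh x wx) ?_ ?_ ?_ ?_ hη0.le hCL ?_ hW ?_
  · simp only [eh0, ex0] at main
    exact main
  · simp only [inNeps, Set.ofPred_forall]
    exact isClosed_iInter fun i => isClosed_le (hdelta i) continuous_const
  · intro t ht hFt
    have hlt := deltaI_lt_of_inNF hs hd0 hμ hε hε15 hdd hdlow hρ hRIP hAe ht hFt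
    filter_upwards [Filter.eventually_all.2 fun i =>
      (hdelta i).continuousAt.eventually_lt_const (hlt i)] with u hu i
    exact (hu i).le
  · simpa [eh0, ex0] using hzε
  · simpa [eh0, ex0, inNF] using hzF
  · rwa [le_div_iff₀ hCL, mul_comm] at hηCL
  · intro T hT hgood
    have hlip := hLip h x (fun i k => (T : ℂ) * wh i k) (fun i j => (T : ℂ) * wx i j)
      (fun τ hτ => by
        rw [shiftV_smul, shiftV_smul]
        exact hgood τ hτ) 1 (by simp)
    rw [shiftV_smul, shiftV_smul, one_mul, mul_one, pairNorm_smul hT.1] at hlip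
    have hcs := pairInner_le
      (fun i k => gradH b a h0 x0 e ρ μ dd (shiftV h wh T) (shiftV x wx T) i k - gh i k)
      (fun i j => gradX b a h0 x0 e ρ μ dd (shiftV h wh T) (shiftV x wx T) i j - gx i j) wh wx
    have hself : pairInner gh gx wh wx = -W := by
      rw [pairInner_neg_right, pairInner_self, hWsum]
    have hprod := mul_le_mul_of_nonneg_right hlip (Real.sqrt_nonneg _ : 0 ≤ pairNorm wh wx)
    have hfin : CL * (T * pairNorm wh wx) * pairNorm wh wx = CL * T * W := by
      rw [← hnorm]
      ring
    rw [pairInner_sub_left, hself] at hcs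
    have hchain := hcs.trans (hprod.trans_eq hfin)
    linarith

end RGD
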